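/- Let p be a prime and let (λ_1, ..., λ_k) be a partition of f with λ_1 ≥ ... ≥ λ_k, and suppose n ≥ f + 2λ_1. Then for every positive integer c, the number of isomorphism classes of nilpotent Lie rings L of order p^n such that L has nilpotency class exactly c, μ_2(L) = λ_1, and Ω_{μ_2(L)}(L) has type invariants (λ_1, λ_1, λ_2, ..., λ_k), is independent of n; that is, for all n, n' ≥ f + 2λ_1 these counts are equal. -/

import Mathlib

/-- The lower central series of a Lie ring, as additive subgroups. -/
def lieLCS (L : Type) [LieRing L] : ℕ → AddSubgroup L
  | 0 => ⊤
  | (k + 1) => AddSubgroup.closure {x : L | ∃ y ∈ lieLCS L k, ∃ z : L, x = ⁅y, z⁆}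

/-- A Lie ring is nilpotent if its lower central series reaches `⊥`. -/
def IsNilpotentLieRing (L : Type) [LieRing L] : Prop :=
  ∃ c : ℕ, lieLCS L c = ⊥

/-- The nilpotency class of a Lie ring: the least `c` with `lieLCS L c = ⊥`. -/
noncomputable def lieNilClass (L : Type) [LieRing L] : ℕ :=
  sInf {c : ℕ | lieLCS L c = ⊥}

/-- `Ω_i(A) = {x : p^i • x = 0}` for an additive group `A`. -/
def aOmega (p : ℕ) (A : Type) [AddCommGroup A] (i : ℕ) : AddSubgroup A :=
  AddSubgroup.closure {x : A | p ^ i • x = 0}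

/-- `ω_i(A)`, defined by `p ^ ω_i(A) = |Ω_i(A)/Ω_{i-1}(A)|`. -/
noncomputable def aOmegaInv (p : ℕ) (A : Type) [AddCommGroup A] (i : ℕ) : ℕ :=
  ((aOmega p A (i - 1)).relIndex (aOmega p A i)).factorization p

/-- `μ_j(A)` (for `j ≥ 1`): the dual partition of `(ω_1(A), ω_2(A), ...)`;
these are the type invariants of the abelian `p`-group `A`. -/
noncomputable def aMuInv (p : ℕ) (A : Type) [AddCommGroup A] (j : ℕ) : ℕ :=
  Nat.card {i : ℕ // 1 ≤ i ∧ j ≤ aOmegaInv p A i}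

/-- `A` has type invariants given by the list `l`. -/
def aHasType (p : ℕ) (A : Type) [AddCommGroup A] (l : List ℕ) : Prop :=
  ∀ i : ℕ, aMuInv p A (i + 1) = l.getD i 0

/-- The addition extracted from a Lie ring structure. -/
def addOfLieRing (G : Type) (s : LieRing G) : Add G := by letI := s; infer_instance

/-- The bracket extracted from a Lie ring structure. -/
def bracketOfLieRing (G : Type) (s : LieRing G) : Bracket G G := by letI := s; infer_instance

/-- The number of isomorphism classes of Lie rings with `N` elements whose Lie ring
structure satisfies the predicate `Q`. -/
noncomputable def lieClassCount (N : ℕ) (Q : LieRing (Fin N) → Prop) : ℕ :=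
  Nat.card (Quot fun s t : {s : LieRing (Fin N) // Q s} =>
    ∃ e : @AddEquiv (Fin N) (Fin N) (addOfLieRing _ s.1) (addOfLieRing _ t.1),
      ∀ x y : Fin N,
        e (@Bracket.bracket _ _ (bracketOfLieRing _ s.1) x y) =
          @Bracket.bracket _ _ (bracketOfLieRing _ t.1) (e x) (e y))

/-- The number of isomorphism classes of nilpotent Lie rings `L` of order `p ^ n` with
nilpotency class exactly `c`, `μ_2(L) = λ₁`, and such that `Ω_{μ_2(L)}(L)` has type
invariants `(λ₁, λ₁, λ₂, ..., λ_k)`. -/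
noncomputable def stmt12Count (p n c lam1 : ℕ) (rest : List ℕ) : ℕ :=
  lieClassCount (p ^ n) fun s =>
    letI := s
    IsNilpotentLieRing (Fin (p ^ n)) ∧ lieNilClass (Fin (p ^ n)) = c ∧
      aMuInv p (Fin (p ^ n)) 2 = lam1 ∧
      aHasType p (↥(aOmega p (Fin (p ^ n)) (aMuInv p (Fin (p ^ n)) 2)))
        (lam1 :: lam1 :: rest)


noncomputable section S12

def zPi (p l m : ℕ) (h : l ≤ m) (B : Type) [AddCommGroup B] :
    ZMod (p ^ m) × B →+ ZMod (p ^ l) × B :=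
  AddMonoidHom.prodMap (ZMod.castHom (pow_dvd_pow p h) (ZMod (p ^ l))).toAddMonoidHom
    (AddMonoidHom.id B)

def zInc1 (p l m : ℕ) (h : l ≤ m) : ZMod (p ^ l) →+ ZMod (p ^ m) :=
  ZMod.lift (p ^ l) ⟨(AddMonoidHom.mulLeft ((p : ZMod (p ^ m)) ^ (m - l))).comp
    (Int.castAddHom (ZMod (p ^ m))), by
      simp only [AddMonoidHom.comp_apply, Int.coe_castAddHom, AddMonoidHom.coe_mulLeft]
      have : ((p ^ (m - l) * p ^ l : ℕ) : ZMod (p ^ m)) = 0 := by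
        rw [← pow_add, Nat.sub_add_cancel h, ZMod.natCast_self]
      push_cast at this ⊢
      exact this⟩

def zInc (p l m : ℕ) (h : l ≤ m) (B : Type) [AddCommGroup B] :
    ZMod (p ^ l) × B →+ ZMod (p ^ m) × B :=
  AddMonoidHom.prodMap (zInc1 p l m h) (AddMonoidHom.id B)

lemma zInc1_int (p l m : ℕ) (h : l ≤ m) (z : ℤ) :
    zInc1 p l m h (z : ZMod (p ^ l)) = (p : ZMod (p ^ m)) ^ (m - l) * z := by
  simp [zInc1]

lemma zPi_int (p l m : ℕ) (h : l ≤ m) (B : Type) [AddCommGroup B] (z : ℤ) (b : B) :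
    zPi p l m h B ((z : ZMod (p ^ m)), b) = ((z : ZMod (p ^ l)), b) := by
  simp [zPi]

lemma zInc_int (p l m : ℕ) (h : l ≤ m) (B : Type) [AddCommGroup B] (z : ℤ) (b : B) :
    zInc p l m h B (z, b) = ((p : ZMod (p ^ m)) ^ (m - l) * z, b) := by
  simp [zInc, zInc1_int]

variable {p l m : ℕ} (h : l ≤ m) {B : Type} [AddCommGroup B]

lemma zPi_surj : Function.Surjective (zPi p l m h B) := by
  rintro ⟨s, b⟩
  obtain ⟨z, rfl⟩ := ZMod.intCast_surjective s
  exact ⟨((z : ZMod (p ^ m)), b), zPi_int p l m h B z b⟩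

lemma zInc_inj (hp : p.Prime) (h : l ≤ m) : Function.Injective (zInc p l m h B) := by
  have : NeZero (p ^ m) := ⟨(pow_pos hp.pos _).ne'⟩
  have : NeZero (p ^ l) := ⟨(pow_pos hp.pos _).ne'⟩
  rw [injective_iff_map_eq_zero]
  rintro ⟨s, b⟩ hs
  obtain ⟨z, rfl⟩ := ZMod.intCast_surjective s
  rw [zInc_int, Prod.mk_eq_zero] at hs
  obtain ⟨h1, rfl⟩ := hs
  have h2 : ((p ^ (m - l) * z : ℤ) : ZMod (p ^ m)) = 0 := by push_cast; exact h1
  rw [ZMod.intCast_zmod_eq_zero_iff_dvd ] at h2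
  rw [Prod.mk_eq_zero]
  refine ⟨?_, rfl⟩
  rw [ZMod.intCast_zmod_eq_zero_iff_dvd ]
  have : (p ^ m : ℕ) = p ^ (m - l) * p ^ l := by rw [← pow_add, Nat.sub_add_cancel h]
  rw [this] at h2
  push_cast at h2 ⊢
  refine Int.dvd_of_mul_dvd_mul_left ?_ h2
  exact (pow_pos (by exact_mod_cast hp.pos) _).ne'

lemma zInc_range (hp : p.Prime) (h : l ≤ m) (x : ZMod (p ^ m) × B) (hx : p ^ l • x = 0) :
    ∃ v, zInc p l m h B v = x := by
  have : NeZero (p ^ m) := ⟨(pow_pos hp.pos _).ne'⟩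
  obtain ⟨s, b⟩ := x
  obtain ⟨z, rfl⟩ := ZMod.intCast_surjective s
  rw [Prod.smul_mk, Prod.mk_eq_zero] at hx
  have h2 : ((p ^ l * z : ℤ) : ZMod (p ^ m)) = 0 := by simpa using hx.1
  rw [ZMod.intCast_zmod_eq_zero_iff_dvd ] at h2
  have : (p ^ m : ℕ) = p ^ l * p ^ (m - l) := by rw [← pow_add, Nat.add_sub_cancel' h]
  rw [this] at h2
  push_cast at h2
  obtain ⟨w, rfl⟩ := Int.dvd_of_mul_dvd_mul_left
    (pow_pos (by exact_mod_cast hp.pos) _).ne' h2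
  exact ⟨(w, b), by rw [zInc_int]; push_cast; rfl⟩

lemma zV_smul (hB : ∀ b : B, p ^ l • b = 0) (v : ZMod (p ^ l) × B) : p ^ l • v = 0 := by
  obtain ⟨s, b⟩ := v
  rw [Prod.smul_mk, hB, Prod.mk_eq_zero]
  refine ⟨?_, rfl⟩
  rw [nsmul_eq_mul, ZMod.natCast_self, zero_mul]

lemma zPi_ker (hp : p.Prime) (h : l ≤ m) (x : ZMod (p ^ m) × B) (hx : zPi p l m h B x = 0) :
    ∃ z : ℤ, x = (((p ^ l * z : ℤ) : ZMod (p ^ m)), 0) := by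
  have : NeZero (p ^ l) := ⟨(pow_pos hp.pos _).ne'⟩
  obtain ⟨s, b⟩ := x
  obtain ⟨z, rfl⟩ := ZMod.intCast_surjective s
  rw [zPi_int, Prod.mk_eq_zero] at hx
  obtain ⟨h2, rfl⟩ := hx
  rw [ZMod.intCast_zmod_eq_zero_iff_dvd ] at h2
  push_cast at h2
  obtain ⟨w, rfl⟩ := h2
  exact ⟨w, rfl⟩

lemma zPi_zInc (h2 : 2 * l ≤ m) (v : ZMod (p ^ l) × B) :
    zPi p l m h B (zInc p l m h B v) = (0, v.2) := by
  obtain ⟨s, b⟩ := v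
  obtain ⟨z, rfl⟩ := ZMod.intCast_surjective s
  rw [zInc_int]
  have := zPi_int p l m h B (p ^ (m - l) * z) b
  push_cast at this
  rw [this]
  have h3 : (p : ZMod (p ^ l)) ^ (m - l) = 0 := by
    have : ((p ^ l * p ^ (m - l - l) : ℕ) : ZMod (p ^ l)) = 0 := by
      rw [Nat.cast_mul, ZMod.natCast_self, zero_mul]
    rw [← pow_add, show l + (m - l - l) = m - l by omega] at this
    exact_mod_cast this
  rw [h3, zero_mul]

/-- lifting lemma -/
lemma zLift {m' : ℕ} (hl : 0 < l) (h2 : 2 * l ≤ m) (h' : l ≤ m') (h2' : 2 * l ≤ m') (hp : p.Prime)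
    {C : Type} [AddCommGroup C] [Finite B] [Finite C]
    (hB : ∀ b : B, p ^ l • b = 0) (hC : ∀ b : C, p ^ l • b = 0)
    (e : ZMod (p ^ m) × B ≃+ ZMod (p ^ m) × C) :
    ∃ (e' : ZMod (p ^ m') × B ≃+ ZMod (p ^ m') × C)
      (eV eW : ZMod (p ^ l) × B → ZMod (p ^ l) × C),
      (∀ x, zPi p l m h C (e x) = eV (zPi p l m h B x)) ∧
      (∀ v, e (zInc p l m h B v) = zInc p l m h C (eW v)) ∧
      (∀ x, zPi p l m' h' C (e' x) = eV (zPi p l m' h' B x)) ∧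
      (∀ v, e' (zInc p l m' h' B v) = zInc p l m' h' C (eW v)) := by
  have : NeZero (p ^ m) := ⟨(pow_pos hp.pos _).ne'⟩
  have : NeZero (p ^ m') := ⟨(pow_pos hp.pos _).ne'⟩
  have : NeZero (p ^ l) := ⟨(pow_pos hp.pos _).ne'⟩
  -- e_W
  have hW : ∀ v, ∃ w, zInc p l m h C w = e (zInc p l m h B v) := fun v => by
    apply zInc_range hp h
    rw [← map_nsmul, ← map_nsmul, zV_smul hB, map_zero, map_zero]
  choose eW heW using hW
  have eW_add : ∀ v w, eW (v + w) = eW v + eW w := fun v w => by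
    apply zInc_inj hp h; simp [heW]
  -- e_V
  have hV : ∀ x, zPi p l m h B x = 0 → zPi p l m h C (e x) = 0 := by
    intro x hx
    obtain ⟨z, rfl⟩ := zPi_ker hp h x hx
    have : ((((p ^ l * z : ℤ) : ZMod (p ^ m)), 0) : ZMod (p ^ m) × B) = p ^ l • ((z : ZMod (p ^ m)), 0) := by
      simp
    rw [this, map_nsmul, map_nsmul, zV_smul hC]
  choose σ hσ using zPi_surj (p := p) h (B := B)
  let eV : ZMod (p ^ l) × B → ZMod (p ^ l) × C := fun v => zPi p l m h C (e (σ v))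
  have heV : ∀ x, zPi p l m h C (e x) = eV (zPi p l m h B x) := by
    intro x
    have := hV (x - σ (zPi p l m h B x)) (by rw [map_sub, hσ, sub_self])
    rw [map_sub, map_sub, sub_eq_zero] at this
    exact this
  have eV_add : ∀ v w, eV (v + w) = eV v + eV w := fun v w => by
    obtain ⟨x, rfl⟩ := zPi_surj (p := p) h (B := B) v
    obtain ⟨y, rfl⟩ := zPi_surj (p := p) h (B := B) w
    rw [← map_add, ← heV, ← heV, ← heV]; simp
  let EV : ZMod (p ^ l) × B →+ ZMod (p ^ l) × C := AddMonoidHom.mk' eV eV_add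
  let EW : ZMod (p ^ l) × B →+ ZMod (p ^ l) × C := AddMonoidHom.mk' eW eW_add
  obtain ⟨⟨u, c0⟩, huc⟩ : ∃ q, q = e (1, 0) := ⟨_, rfl⟩
  obtain ⟨z, rfl⟩ := ZMod.intCast_surjective u
  have hCpow : ∀ k, l ≤ k → ∀ c : C, p ^ k • c = 0 := fun k hk c => by
    obtain ⟨j, rfl⟩ := Nat.exists_eq_add_of_le hk
    rw [pow_add, mul_comm, mul_smul, hC, smul_zero]
  let a' : ZMod (p ^ m') →+ ZMod (p ^ m') × C :=
    ZMod.lift (p ^ m') ⟨(zmultiplesHom _) ((z : ZMod (p ^ m')), c0), by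
      rw [zmultiplesHom_apply, natCast_zsmul, Prod.smul_mk, hCpow _ h', nsmul_eq_mul,
        ZMod.natCast_self, zero_mul]; rfl⟩
  have ha' : ∀ w : ℤ, a' (w : ZMod (p ^ m')) = w • ((z : ZMod (p ^ m')), c0) := fun w => by
    simp [a']
  let E : ZMod (p ^ m') × B →+ ZMod (p ^ m') × C :=
    AddMonoidHom.coprod a' ((zInc p l m' h' C).comp (EW.comp (AddMonoidHom.inr _ _)))
  have hE : ∀ x b, E (x, b) = a' x + zInc p l m' h' C (eW (0, b)) := fun x b => by
    simp [E, EW]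
  -- values
  have hEV1 : ∀ w : ℤ, eV ((w : ZMod (p ^ l)), 0) = w • ((z : ZMod (p ^ l)), c0) := fun w => by
    have h1 : eV ((1 : ℤ), 0) = ((z : ZMod (p ^ l)), c0) := by
      rw [← zPi_int p l m h B 1 0, ← heV, Int.cast_one, ← huc, zPi_int]
    have : ((w : ZMod (p ^ l)), (0 : B)) = w • (((1 : ℤ) : ZMod (p ^ l)), 0) := by simp
    rw [this, ← h1]
    exact map_zsmul EV _ _
  have hEW1 : ∀ w : ℤ, eW ((w : ZMod (p ^ l)), 0) = w • ((z : ZMod (p ^ l)), 0) := fun w => by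
    have h1 : eW ((1 : ℤ), 0) = ((z : ZMod (p ^ l)), 0) := by
      apply zInc_inj hp h
      rw [heW, zInc_int, zInc_int]
      have : (((p : ZMod (p ^ m)) ^ (m - l) * (1 : ℤ), 0) : ZMod (p ^ m) × B) = p ^ (m - l) • (1, 0) := by
        simp
      rw [this, map_nsmul, ← huc, Prod.smul_mk, hCpow _ (by omega)]
      simp
    have : ((w : ZMod (p ^ l)), (0 : B)) = w • (((1 : ℤ) : ZMod (p ^ l)), 0) := by simp
    rw [this, ← h1]
    exact map_zsmul EW _ _
  have hpi : ∀ x, zPi p l m' h' C (E x) = eV (zPi p l m' h' B x) := by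
    rintro ⟨s, b⟩
    obtain ⟨w, rfl⟩ := ZMod.intCast_surjective s
    rw [hE, map_add, ha', map_zsmul, zPi_int, zPi_int, zPi_zInc h' h2', ← zPi_zInc h h2, heW, heV,
      zPi_zInc h h2, ← hEV1, ← eV_add]
    simp
  have hinc : ∀ v, E (zInc p l m' h' B v) = zInc p l m' h' C (eW v) := by
    rintro ⟨s, b⟩
    obtain ⟨w, rfl⟩ := ZMod.intCast_surjective s
    rw [zInc_int, hE]
    have h1 := ha' (p ^ (m' - l) * w)
    push_cast at h1
    rw [h1]
    have h3 : ((w : ZMod (p ^ l)), b) = ((w : ZMod (p ^ l)), 0) + (0, b) := by simp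
    rw [h3, eW_add, map_add, hEW1]
    congr 1
    rw [map_zsmul, zInc_int, mul_comm, mul_smul]
    congr 1
    rw [Prod.smul_mk]
    have := hCpow (m' - l) (by omega) c0
    have h4 : ((p : ℤ) ^ (m' - l)) • c0 = 0 := by
      rw [← this, ← natCast_zsmul]; push_cast; rfl
    rw [h4]; simp
  have hinj : Function.Injective E := by
    rw [injective_iff_map_eq_zero]
    intro x hx
    by_contra hx0
    -- some multiple in Ω_l
    have hK : ∃ k, p ^ k • x = 0 := ⟨m', by
      obtain ⟨s, b⟩ := x
      obtain ⟨j, hj⟩ := Nat.exists_eq_add_of_le h'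
      rw [Prod.smul_mk, nsmul_eq_mul, ZMod.natCast_self, zero_mul, hj, pow_add, mul_comm, mul_smul, hB,
        smul_zero]; rfl⟩
    classical
    have hk := Nat.find_spec hK
    have hk' := fun j => Nat.find_min (m := j) hK
    set k := Nat.find hK
    have hk0 : k ≠ 0 := fun h0 => hx0 (by simpa [h0] using hk)
    obtain ⟨j, hj⟩ := Nat.exists_eq_succ_of_ne_zero hk0
    have hy0 : p ^ j • x ≠ 0 := hk' j (by omega)
    obtain ⟨v, hv⟩ := zInc_range hp h' (p ^ j • x) (by
      obtain ⟨i, rfl⟩ := Nat.exists_eq_add_of_le hl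
      rw [← mul_smul, ← pow_add]
      rw [show 0 + 1 + i + j = i + k by omega, pow_add, mul_smul, hk, smul_zero])
    have h5 : zInc p l m' h' C (eW v) = 0 := by rw [← hinc, hv, map_nsmul, hx, smul_zero]
    have h6 : eW v = 0 := zInc_inj hp h' (by rw [h5, map_zero])
    have h7 : e (zInc p l m h B v) = 0 := by rw [← heW, h6, map_zero]
    have h8 : zInc p l m h B v = 0 := by simpa using h7
    have h9 : v = 0 := zInc_inj hp h (by rw [h8, map_zero])
    exact hy0 (by rw [← hv, h9, map_zero])
  have hcard : Nat.card (ZMod (p ^ m') × B) = Nat.card (ZMod (p ^ m') × C) := by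
    have := Nat.card_congr e.toEquiv
    rw [Nat.card_prod, Nat.card_prod, Nat.card_zmod] at this
    rw [Nat.card_prod, Nat.card_prod, Nat.eq_of_mul_eq_mul_left (pow_pos hp.pos _) this]
  have hbij : Function.Bijective E :=
    (Nat.bijective_iff_injective_and_card E).2 ⟨hinj, hcard⟩
  exact ⟨AddEquiv.ofBijective E hbij, eV, eW, heV, fun v => (heW v).symm, hpi, hinc⟩

end S12

noncomputable section S12B

lemma mem_aOmega (p : ℕ) (A : Type) [AddCommGroup A] (i : ℕ) (x : A) :
    x ∈ aOmega p A i ↔ p ^ i • x = 0 := by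
  constructor
  · intro hx
    refine AddSubgroup.closure_induction (p := fun y _ => p ^ i • y = 0) (fun y hy => hy) ?_ ?_ ?_ hx
    · simp
    · intro a b _ _ ha hb; rw [smul_add, ha, hb, add_zero]
    · intro a _ ha; rw [smul_neg, ha, neg_zero]
  · exact fun hx => AddSubgroup.subset_closure hx

lemma aOmega_mono (p : ℕ) (A : Type) [AddCommGroup A] {i j : ℕ} (h : i ≤ j) :
    aOmega p A i ≤ aOmega p A j := by
  intro x hx
  rw [mem_aOmega] at *
  obtain ⟨k, rfl⟩ := Nat.exists_eq_add_of_le h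
  rw [pow_add, mul_comm, mul_smul, hx, smul_zero]

/-- log of the order of Omega -/
def aLog (p : ℕ) (A : Type) [AddCommGroup A] (i : ℕ) : ℕ :=
  (Nat.card (aOmega p A i)).factorization p

lemma aLog_eq_omega (p : ℕ) (A : Type) [AddCommGroup A] [Finite A] (i : ℕ) :
    aLog p A i = aLog p A (i - 1) + aOmegaInv p A i := by
  have h := AddSubgroup.relIndex_mul_relIndex ⊥ _ _ bot_le (aOmega_mono p A (Nat.sub_le i 1))
  rw [AddSubgroup.relIndex_bot_left, AddSubgroup.relIndex_bot_left] at h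
  unfold aLog aOmegaInv
  have h1 : Nat.card (aOmega p A i) ≠ 0 := Nat.card_pos.ne'
  have h2 : Nat.card (aOmega p A (i - 1)) ≠ 0 := Nat.card_pos.ne'
  have h3 : (aOmega p A (i - 1)).relIndex (aOmega p A i) ≠ 0 := by
    intro h0; rw [h0, mul_zero] at h; exact h1 h.symm
  rw [← h, Nat.factorization_mul h2 h3]; rfl

lemma aOmegaInv_eq (p : ℕ) (A : Type) [AddCommGroup A] [Finite A] (i : ℕ) :
    aOmegaInv p A i = aLog p A i - aLog p A (i - 1) := by
  rw [aLog_eq_omega p A i]; omega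

lemma aLog_congr (p : ℕ) {A A' : Type} [AddCommGroup A] [AddCommGroup A'] (e : A ≃+ A') (i : ℕ) :
    aLog p A i = aLog p A' i := by
  unfold aLog
  congr 2
  refine Nat.card_congr (e.toEquiv.subtypeEquiv fun a => ?_)
  rw [mem_aOmega, mem_aOmega]
  change _ ↔ p ^ i • e a = 0
  rw [← map_nsmul, EmbeddingLike.map_eq_zero_iff]

lemma aMuInv_congr (p : ℕ) {A A' : Type} [AddCommGroup A] [AddCommGroup A'] [Finite A]
    (e : A ≃+ A') (j : ℕ) : aMuInv p A j = aMuInv p A' j := by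
  have : Finite A' := Finite.of_equiv A e.toEquiv
  unfold aMuInv
  simp_rw [aOmegaInv_eq, aLog_congr p e]

lemma aHasType_congr (p : ℕ) {A A' : Type} [AddCommGroup A] [AddCommGroup A'] [Finite A]
    (e : A ≃+ A') (ls : List ℕ) : aHasType p A ls ↔ aHasType p A' ls := by
  unfold aHasType
  simp_rw [aMuInv_congr p e]

lemma aLog_zmod {p : ℕ} (hp : p.Prime) (m i : ℕ) : aLog p (ZMod (p ^ m)) i = min m i := by
  have : NeZero (p ^ m) := ⟨(pow_pos hp.pos _).ne'⟩
  unfold aLog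
  have h1 : aOmega p (ZMod (p ^ m)) i = (nsmulAddMonoidHom (p ^ i)).ker := by
    ext x; rw [mem_aOmega]; rfl
  rw [h1, IsAddCyclic.card_nsmulAddMonoidHom_ker, Nat.card_zmod]
  have : (p ^ m).gcd (p ^ i) = p ^ min m i := by
    rcases le_total m i with h | h
    · rw [min_eq_left h, Nat.gcd_eq_left (pow_dvd_pow p h)]
    · rw [min_eq_right h, Nat.gcd_eq_right (pow_dvd_pow p h)]
  rw [this, hp.factorization_pow]; simp

lemma aLog_prod (p : ℕ) (A B : Type) [AddCommGroup A] [AddCommGroup B] [Finite A] [Finite B] (i : ℕ) :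
    aLog p (A × B) i = aLog p A i + aLog p B i := by
  unfold aLog
  have : Nat.card (aOmega p (A × B) i) = Nat.card (aOmega p A i) * Nat.card (aOmega p B i) := by
    rw [← Nat.card_prod]
    have h1 : aOmega p (A × B) i = (aOmega p A i).prod (aOmega p B i) := by
      ext ⟨a, b⟩
      rw [AddSubgroup.mem_prod, mem_aOmega, mem_aOmega, mem_aOmega, Prod.smul_mk, Prod.mk_eq_zero]
    rw [h1]
    exact Nat.card_congr (AddSubgroup.prodEquiv _ _).toEquiv
  rw [this, Nat.factorization_mul Nat.card_pos.ne' Nat.card_pos.ne']; rfl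

lemma aLog_top {p : ℕ} (hp : p.Prime) (A : Type) [AddCommGroup A] {k n : ℕ} (hc : Nat.card A = p ^ n)
    (h : ∀ a : A, p ^ k • a = 0) : aLog p A k = n := by
  have : aOmega p A k = ⊤ := by ext x; simp [mem_aOmega, h]
  unfold aLog
  rw [this, AddSubgroup.card_top, hc, hp.factorization_pow]; simp

lemma aLog_lt {p : ℕ} (hp : p.Prime) (A : Type) [AddCommGroup A] [Finite A] {n : ℕ}
    (hc : Nat.card A = p ^ n) {i j : ℕ} (h : aOmega p A i < aOmega p A j) :
    aLog p A i < aLog p A j := by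
  have key : ∀ i, Nat.card (aOmega p A i) = p ^ aLog p A i := by
    intro i
    have := AddSubgroup.card_addSubgroup_dvd_card (aOmega p A i)
    rw [hc, Nat.dvd_prime_pow hp] at this
    obtain ⟨k, _, hk⟩ := this
    unfold aLog
    rw [hk, hp.factorization_pow]; simp
  have h2 : Nat.card (aOmega p A i) < Nat.card (aOmega p A j) :=
    Set.Finite.card_lt_card (Set.toFinite _) h
  rw [key, key] at h2
  exact (Nat.pow_lt_pow_iff_right hp.one_lt).1 h2

/-- computation of mu_2 -/
lemma aMuInv_two {p : ℕ} (hp : p.Prime) {M E f : ℕ} (hEM : E ≤ M) (B : Type) [AddCommGroup B] [Finite B]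
    (hc : Nat.card B = p ^ f) (hE : ∀ b : B, p ^ E • b = 0)
    (hE' : ∀ k < E, ∃ b : B, p ^ k • b ≠ 0) :
    aMuInv p (ZMod (p ^ M) × B) 2 = E := by
  have : NeZero (p ^ M) := ⟨(pow_pos hp.pos _).ne'⟩
  have key : ∀ i, (1 ≤ i ∧ 2 ≤ aOmegaInv p (ZMod (p ^ M) × B) i) ↔ i ∈ Finset.Icc 1 E := by
    intro i
    rw [Finset.mem_Icc, aOmegaInv_eq, aLog_prod, aLog_prod, aLog_zmod hp, aLog_zmod hp]
    constructor
    · rintro ⟨h1, h2⟩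
      refine ⟨h1, ?_⟩
      by_contra! hlt
      have h3 : ∀ k, E ≤ k → aLog p B k = f := fun k hk => aLog_top hp B hc fun a => by
        obtain ⟨j, rfl⟩ := Nat.exists_eq_add_of_le hk
        rw [pow_add, mul_comm, mul_smul, hE, smul_zero]
      rw [h3 i (by omega), h3 (i - 1) (by omega)] at h2
      omega
    · rintro ⟨h1, h2⟩
      refine ⟨h1, ?_⟩
      have : aLog p B (i - 1) < aLog p B i := by
        apply aLog_lt hp B hc
        refine lt_of_le_of_ne (aOmega_mono p B (Nat.sub_le i 1)) ?_
        intro heq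
        obtain ⟨b, hb⟩ := hE' (E - 1) (by omega)
        have h4 : p ^ (E - i) • b ∈ aOmega p B i := by
          rw [mem_aOmega, ← mul_smul, ← pow_add, show i + (E - i) = E by omega, hE]
        rw [← heq, mem_aOmega, ← mul_smul, ← pow_add, show i - 1 + (E - i) = E - 1 by omega] at h4
        exact hb h4
      omega
  unfold aMuInv
  rw [Nat.card_congr (Equiv.subtypeEquivRight key), Nat.card_eq_fintype_card, Fintype.card_coe, Nat.card_Icc]
  omega

/-- order from type -/
lemma aHasType_card {p : ℕ} (A : Type) [AddCommGroup A] [Finite A] (ls : List ℕ) (K : ℕ)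
    (hK : ∀ a : A, p ^ K • a = 0) (h : aHasType p A ls) : aLog p A K = ls.sum := by
  have h0 : ∀ i, K < i → aOmegaInv p A i = 0 := by
    intro i hi
    rw [aOmegaInv_eq]
    have : ∀ k, K ≤ k → aOmega p A k = ⊤ := fun k hk => by
      rw [eq_top_iff]
      intro x _
      exact aOmega_mono p A hk ((mem_aOmega ..).2 (hK x))
    unfold aLog
    rw [this i (by omega), this (i - 1) (by omega), Nat.sub_self]
  have hmu : ∀ j, aMuInv p A (j + 1) =
      ((Finset.range K).filter fun i => j + 1 ≤ aOmegaInv p A (i + 1)).card := by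
    intro j
    unfold aMuInv
    have key : ∀ i, (1 ≤ i ∧ j + 1 ≤ aOmegaInv p A i) ↔
        i ∈ ((Finset.range K).filter fun i => j + 1 ≤ aOmegaInv p A (i + 1)).image (· + 1) := by
      intro i
      simp only [Finset.mem_image, Finset.mem_filter, Finset.mem_range]
      constructor
      · rintro ⟨h1, h2⟩
        have : i ≤ K := by
          by_contra! hlt
          rw [h0 i hlt] at h2; omega
        have hi : i - 1 + 1 = i := by omega
        exact ⟨i - 1, ⟨by omega, by rw [hi]; exact h2⟩, hi⟩
      · rintro ⟨a, ⟨_, h2⟩, rfl⟩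
        exact ⟨by omega, h2⟩
    rw [Nat.card_congr (Equiv.subtypeEquivRight key), Nat.card_eq_fintype_card, Fintype.card_coe,
      Finset.card_image_of_injective _ (add_left_injective 1)]
  have hlen : ∀ i < K, aOmegaInv p A (i + 1) ≤ ls.length := by
    intro i hi
    by_contra! hlt
    have h1 := h ls.length
    rw [List.getD_eq_default _ _ le_rfl, hmu, Finset.card_eq_zero, Finset.filter_eq_empty_iff] at h1
    exact h1 (Finset.mem_range.2 hi) hlt
  have hsum : ∀ k, aLog p A k = ∑ i ∈ Finset.range k, aOmegaInv p A (i + 1) := by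
    intro k
    induction k with
    | zero =>
      have : aOmega p A 0 = ⊥ := by ext x; simp [mem_aOmega]
      simp [aLog, this]
    | succ k ih => rw [Finset.sum_range_succ, ← ih, aLog_eq_omega, Nat.add_sub_cancel]
  have hls : ls.sum = ∑ j ∈ Finset.range ls.length, ls.getD j 0 := by
    rw [Finset.sum_range, ← List.sum_ofFn]
    congr 1
    apply List.ext_getElem <;> simp
  rw [hsum, hls]
  have h' : ∀ i, ls.getD i 0 = aMuInv p A (i + 1) := fun i => (h i).symm
  simp_rw [h', hmu, Finset.card_filter]
  rw [Finset.sum_comm]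
  refine Finset.sum_congr rfl fun i hi => ?_
  rw [← Finset.card_filter]
  have h2 := hlen i (Finset.mem_range.1 hi)
  have : (Finset.range ls.length).filter (fun j => j + 1 ≤ aOmegaInv p A (i + 1)) =
      Finset.range (aOmegaInv p A (i + 1)) := by
    ext j; simp; omega
  rw [this, Finset.card_range]

/-- splitting off a maximal cyclic summand -/
lemma aSplit {p : ℕ} (hp : p.Prime) (G : Type) [AddCommGroup G] {n : ℕ} (hn : 0 < n)
    (hc : Nat.card G = p ^ n) :
    ∃ (M : ℕ) (B : Type) (_ : AddCommGroup B), Nonempty (G ≃+ ZMod (p ^ M) × B) ∧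
      ∀ b : B, p ^ M • b = 0 := by
  classical
  have : Finite G := Nat.finite_of_card_ne_zero (by rw [hc]; exact (pow_pos hp.pos _).ne')
  obtain ⟨ι, _, q, hq, ⟨e⟩⟩ := AddCommGroup.equiv_directSum_zmod_of_finite' G
  let e2 := e.trans (DirectSum.addEquivProd _)
  have hcard : p ^ n = ∏ i, q i := by
    rw [← hc, Nat.card_congr e2.toEquiv, Nat.card_pi]; simp
  have hdvd : ∀ i, ∃ k, q i = p ^ k := fun i => by
    have : q i ∣ p ^ n := hcard ▸ Finset.dvd_prod_of_mem q (Finset.mem_univ i)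
    obtain ⟨k, _, hk⟩ := (Nat.dvd_prime_pow hp).1 this
    exact ⟨k, hk⟩
  choose k hk using hdvd
  obtain rfl : q = fun i => p ^ k i := funext hk
  have hne : Nonempty ι := by
    by_contra hemp
    rw [not_nonempty_iff] at hemp
    simp at hcard
    rcases hcard with h | h
    · exact hp.one_lt.ne' h
    · omega
  obtain ⟨i0, -, hi0⟩ := Finset.exists_max_image Finset.univ k Finset.univ_nonempty
  let sp : (∀ i, ZMod (p ^ k i)) ≃+ ZMod (p ^ k i0) × ∀ j : {j // j ≠ i0}, ZMod (p ^ k j) :=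
    { Equiv.piSplitAt i0 (fun i => ZMod (p ^ k i)) with map_add' := fun _ _ => rfl }
  refine ⟨k i0, ∀ j : {j // j ≠ i0}, ZMod (p ^ k j), inferInstance, ⟨e2.trans sp⟩, fun b => ?_⟩
  ext j
  rw [Pi.smul_apply, nsmul_eq_mul]
  have : ((p ^ k i0 : ℕ) : ZMod (p ^ k j)) = 0 :=
    (ZMod.natCast_eq_zero_iff _ _).2 (pow_dvd_pow p (hi0 j (Finset.mem_univ _)))
  rw [this, zero_mul]; rfl

end S12B

noncomputable section S12C

def PresZ (p l m : ℕ) (h : l ≤ m) (B : Type) [AddCommGroup B]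
    (β : ZMod (p ^ l) × B → ZMod (p ^ l) × B → ZMod (p ^ l) × B) (L : Type) [LieRing L] : Prop :=
  ∃ e : L ≃+ ZMod (p ^ m) × B, ∀ x y : L,
    e ⁅x, y⁆ = zInc p l m h B (β (zPi p l m h B (e x)) (zPi p l m h B (e y)))

def CondZ (p c l : ℕ) (rest : List ℕ) (L : Type) [LieRing L] : Prop :=
  IsNilpotentLieRing L ∧ lieNilClass L = c ∧
      aMuInv p L 2 = l ∧ aHasType p (↥(aOmega p L (aMuInv p L 2))) (l :: l :: rest)

def IsoZ (L L' : Type) [LieRing L] [LieRing L'] : Prop :=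
  ∃ e : L ≃+ L', ∀ x y : L, e ⁅x, y⁆ = ⁅e x, e y⁆

def GoodB (p l f : ℕ) (B : Type) [AddCommGroup B] : Prop :=
  Nat.card B = p ^ f ∧ (∀ b : B, p ^ l • b = 0) ∧ ∀ k < l, ∃ b : B, p ^ k • b ≠ 0

lemma GoodB.finite {p l f : ℕ} (hp : p.Prime) {B : Type} [AddCommGroup B] (h : GoodB p l f B) :
    Finite B :=
  Nat.finite_of_card_ne_zero (by rw [h.1]; exact (pow_pos hp.pos _).ne')

lemma isoZ_transfer {p l m m' f f' : ℕ} (hp : p.Prime) (hl : 0 < l) (h : l ≤ m) (h' : l ≤ m')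
    (h2 : 2 * l ≤ m) (h2' : 2 * l ≤ m')
    {B : Type} [AddCommGroup B] {C : Type} [AddCommGroup C]
    (hB : GoodB p l f B) (hC : GoodB p l f' C)
    {β : ZMod (p ^ l) × B → ZMod (p ^ l) × B → ZMod (p ^ l) × B}
    {γ : ZMod (p ^ l) × C → ZMod (p ^ l) × C → ZMod (p ^ l) × C}
    {L1 L2 L1' L2' : Type} [LieRing L1] [LieRing L2] [LieRing L1'] [LieRing L2']
    (H1 : PresZ p l m h B β L1) (H2 : PresZ p l m h C γ L2)
    (H1' : PresZ p l m' h' B β L1') (H2' : PresZ p l m' h' C γ L2')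
    (H : IsoZ L1 L2) : IsoZ L1' L2' := by
  have := hB.finite hp
  have := hC.finite hp
  obtain ⟨e1, he1⟩ := H1
  obtain ⟨e2, he2⟩ := H2
  obtain ⟨e1', he1'⟩ := H1'
  obtain ⟨e2', he2'⟩ := H2'
  obtain ⟨g, hg⟩ := H
  obtain ⟨E', eV, eW, hV, hW, hV', hW'⟩ :=
    zLift h hl h2 h' h2' hp hB.2.1 hC.2.1 ((e1.symm.trans g).trans e2)
  have key : ∀ v w, eW (β v w) = γ (eV v) (eV w) := by
    intro v w
    obtain ⟨x, rfl⟩ := zPi_surj (p := p) h (B := B) v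
    obtain ⟨y, rfl⟩ := zPi_surj (p := p) h (B := B) w
    apply zInc_inj hp h
    rw [← hW, ← hV, ← hV]
    have h1 := he1 (e1.symm x) (e1.symm y)
    rw [e1.apply_symm_apply, e1.apply_symm_apply] at h1
    rw [← h1]
    simp only [AddEquiv.trans_apply, AddEquiv.symm_apply_apply]
    rw [hg, he2]
  refine ⟨(e1'.trans E').trans e2'.symm, fun x y => ?_⟩
  apply e2'.injective
  rw [he2']
  simp only [AddEquiv.trans_apply, AddEquiv.apply_symm_apply]
  rw [he1', hW', key, hV', hV']

lemma presZ_exists0 {p l m m' f : ℕ} (hp : p.Prime) (h : l ≤ m) (h' : l ≤ m')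
    (h2 : 2 * l ≤ m) (h2' : 2 * l ≤ m')
    {B : Type} [AddCommGroup B] (hB : GoodB p l f B)
    {β : ZMod (p ^ l) × B → ZMod (p ^ l) × B → ZMod (p ^ l) × B}
    {L : Type} [LieRing L] (H : PresZ p l m h B β L) (X : Type)
    (g : X ≃ ZMod (p ^ m') × B) : ∃ s : LieRing X, @PresZ p l m' h' B _ β X s := by
  have := hB.finite hp
  have : NeZero (p ^ m') := ⟨(pow_pos hp.pos _).ne'⟩
  obtain ⟨e, he⟩ := H
  have he' : ∀ x y, zInc p l m h B (β (zPi p l m h B x) (zPi p l m h B y)) =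
      e ⁅e.symm x, e.symm y⁆ := fun x y => by rw [he]; simp
  have hs := zPi_surj (p := p) h (B := B)
  have hi := zInc_inj hp h (B := B)
  have hadd1 : ∀ u v w, β (u + v) w = β u w + β v w := fun u v w => by
    obtain ⟨x, rfl⟩ := hs u
    obtain ⟨y, rfl⟩ := hs v
    obtain ⟨z, rfl⟩ := hs w
    apply hi
    rw [map_add (zInc p l m h B), ← map_add (zPi p l m h B), he', he', he', map_add, add_lie, map_add]
  have hadd2 : ∀ u v w, β u (v + w) = β u v + β u w := fun u v w => by
    obtain ⟨x, rfl⟩ := hs u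
    obtain ⟨y, rfl⟩ := hs v
    obtain ⟨z, rfl⟩ := hs w
    apply hi
    rw [map_add (zInc p l m h B), ← map_add (zPi p l m h B), he', he', he', map_add, lie_add, map_add]
  have hself : ∀ u, β u u = 0 := fun u => by
    obtain ⟨x, rfl⟩ := hs u
    apply hi
    rw [he', lie_self, map_zero, map_zero]
  have hj : ∀ u v w, β u (0, (β v w).2) = β (0, (β u v).2) w + β v (0, (β u w).2) := fun u v w => by
    rw [← zPi_zInc h h2 (β v w), ← zPi_zInc h h2 (β u v), ← zPi_zInc h h2 (β u w)]
    obtain ⟨x, rfl⟩ := hs u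
    obtain ⟨y, rfl⟩ := hs v
    obtain ⟨z, rfl⟩ := hs w
    apply hi
    rw [map_add (zInc p l m h B)]
    simp only [he', AddEquiv.symm_apply_apply]
    rw [leibniz_lie, map_add]
  let ag : AddCommGroup X := g.addCommGroup
  let ge : X ≃+ ZMod (p ^ m') × B := { g with map_add' := fun x y => g.apply_symm_apply _ }
  refine ⟨{ ag with
    bracket := fun x y => ge.symm (zInc p l m' h' B (β (zPi p l m' h' B (ge x)) (zPi p l m' h' B (ge y))))
    add_lie := ?_, lie_add := ?_, lie_self := ?_, leibniz_lie := ?_ }, ge, ?_⟩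
  · intro x y z
    change ge.symm _ = ge.symm _ + ge.symm _
    rw [← map_add, ← map_add, ← hadd1, ← map_add, ← map_add]
  · intro x y z
    change ge.symm _ = ge.symm _ + ge.symm _
    rw [← map_add, ← map_add, ← hadd2, ← map_add, ← map_add]
  · intro x
    change ge.symm _ = 0
    rw [hself, map_zero, map_zero]
  · intro x y z
    change ge.symm (zInc p l m' h' B (β _ (zPi p l m' h' B (ge (ge.symm _))))) =
      ge.symm (zInc p l m' h' B (β (zPi p l m' h' B (ge (ge.symm _))) _)) +
      ge.symm (zInc p l m' h' B (β _ (zPi p l m' h' B (ge (ge.symm _)))))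
    simp only [AddEquiv.apply_symm_apply, zPi_zInc h' h2']
    rw [hj, map_add, map_add]
  · intro x y
    exact ge.apply_symm_apply _

lemma presZ_exists {p l m m' f n' : ℕ} (hp : p.Prime) (h : l ≤ m) (h' : l ≤ m')
    (h2 : 2 * l ≤ m) (h2' : 2 * l ≤ m') (hn' : m' + f = n')
    {B : Type} [AddCommGroup B] (hB : GoodB p l f B)
    {β : ZMod (p ^ l) × B → ZMod (p ^ l) × B → ZMod (p ^ l) × B}
    {L : Type} [LieRing L] (H : PresZ p l m h B β L) :
    ∃ s : LieRing (Fin (p ^ n')), @PresZ p l m' h' B _ β (Fin (p ^ n')) s := by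
  have := hB.finite hp
  have : NeZero (p ^ m') := ⟨(pow_pos hp.pos _).ne'⟩
  have hcard : Nat.card (ZMod (p ^ m') × B) = p ^ n' := by
    rw [Nat.card_prod, Nat.card_zmod, hB.1, ← pow_add, hn']
  exact presZ_exists0 hp h h' h2 h2' hB H _ (Finite.equivFinOfCardEq hcard).symm

def gamZ {p l : ℕ} {B : Type} [AddCommGroup B]
    (β : ZMod (p ^ l) × B → ZMod (p ^ l) × B → ZMod (p ^ l) × B) : ℕ → AddSubgroup (ZMod (p ^ l) × B)
  | 0 => AddSubgroup.closure {x | ∃ v w, x = β v w}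
  | (k + 1) => AddSubgroup.closure {x | ∃ y ∈ gamZ β k, ∃ w, x = β (0, y.2) w}

lemma lcs_bot {p l m : ℕ} (hp : p.Prime) (hl : 0 < l) (h : l ≤ m)
    (h2 : 2 * l ≤ m) {B : Type} [AddCommGroup B]
    {β : ZMod (p ^ l) × B → ZMod (p ^ l) × B → ZMod (p ^ l) × B}
    {L : Type} [LieRing L] (H : PresZ p l m h B β L) (k : ℕ) :
    lieLCS L k = ⊥ ↔ ∃ i, k = i + 1 ∧ gamZ β i = ⊥ := by
  obtain ⟨e, he⟩ := H
  have hs := zPi_surj (p := p) h (B := B)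
  let j : ZMod (p ^ l) × B →+ L := e.symm.toAddMonoidHom.comp (zInc p l m h B)
  have hj : ∀ v, j v = e.symm (zInc p l m h B v) := fun v => rfl
  have hji : Function.Injective j := e.symm.injective.comp (zInc_inj hp h)
  have hbr : ∀ x y : L, ⁅x, y⁆ = j (β (zPi p l m h B (e x)) (zPi p l m h B (e y))) := fun x y => by
    rw [hj, ← he, e.symm_apply_apply]
  have key : ∀ k, lieLCS L (k + 1) = (gamZ β k).map j := by
    intro k
    induction k with
    | zero =>
      rw [gamZ, AddMonoidHom.map_closure]
      change AddSubgroup.closure _ = _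
      congr 1
      ext x
      constructor
      · rintro ⟨y, -, z, rfl⟩
        exact ⟨_, ⟨_, _, rfl⟩, (hbr y z).symm⟩
      · rintro ⟨_, ⟨v, w, rfl⟩, rfl⟩
        obtain ⟨y, rfl⟩ := hs v
        obtain ⟨z, rfl⟩ := hs w
        exact ⟨e.symm y, AddSubgroup.mem_top _, e.symm z, by rw [hbr]; simp⟩
    | succ k ih =>
      rw [gamZ, AddMonoidHom.map_closure, lieLCS, ih]
      congr 1
      ext x
      constructor
      · rintro ⟨_, ⟨v, hv, rfl⟩, z, rfl⟩
        refine ⟨_, ⟨v, hv, zPi p l m h B (e z), rfl⟩, ?_⟩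
        rw [hbr, hj v, e.apply_symm_apply, zPi_zInc h h2]
      · rintro ⟨_, ⟨v, hv, w, rfl⟩, rfl⟩
        obtain ⟨z, rfl⟩ := hs w
        refine ⟨j v, ⟨v, hv, rfl⟩, e.symm z, ?_⟩
        rw [hbr, hj v, e.apply_symm_apply, e.apply_symm_apply, zPi_zInc h h2]
  cases k with
  | zero =>
    constructor
    · intro h0
      exfalso
      have h1 : e.symm (1, 0) ∈ lieLCS L 0 := AddSubgroup.mem_top _
      rw [h0, AddSubgroup.mem_bot] at h1
      have h3 : ((1, 0) : ZMod (p ^ m) × B) = 0 := by simpa using h1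
      have : Fact (1 < p ^ m) := ⟨Nat.one_lt_pow (by omega) hp.one_lt⟩
      exact one_ne_zero (congrArg Prod.fst h3)
    · rintro ⟨i, hi, _⟩; omega
  | succ k =>
    rw [key, AddSubgroup.map_eq_bot_iff_of_injective _ hji]
    constructor
    · exact fun h => ⟨k, rfl, h⟩
    · rintro ⟨i, hi, h⟩
      obtain rfl : k = i := by omega
      exact h

lemma omegaEquiv {p l m : ℕ} (hp : p.Prime) (h : l ≤ m) {B : Type} [AddCommGroup B]
    (hB : ∀ b : B, p ^ l • b = 0) {L : Type} [AddCommGroup L] (e : L ≃+ ZMod (p ^ m) × B) :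
    Nonempty ((ZMod (p ^ l) × B) ≃+ aOmega p L l) := by
  let j : ZMod (p ^ l) × B →+ aOmega p L l :=
    (e.symm.toAddMonoidHom.comp (zInc p l m h B)).codRestrict _ (fun v => by
      rw [mem_aOmega, ← map_nsmul, zV_smul hB, map_zero])
  refine ⟨AddEquiv.ofBijective j ⟨?_, ?_⟩⟩
  · intro v w hvw
    exact zInc_inj hp h (e.symm.injective (congrArg Subtype.val hvw))
  · rintro ⟨x, hx⟩
    rw [mem_aOmega] at hx
    obtain ⟨v, hv⟩ := zInc_range hp h (e x) (by rw [← map_nsmul, hx, map_zero])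
    refine ⟨v, Subtype.ext ?_⟩
    change e.symm (zInc p l m h B v) = x
    rw [hv, e.symm_apply_apply]

lemma cond_transfer {p l m m' f c : ℕ} {rest : List ℕ} (hp : p.Prime) (hl : 0 < l) (h : l ≤ m)
    (h' : l ≤ m') (h2 : 2 * l ≤ m) (h2' : 2 * l ≤ m')
    {B : Type} [AddCommGroup B] (hB : GoodB p l f B)
    {β : ZMod (p ^ l) × B → ZMod (p ^ l) × B → ZMod (p ^ l) × B}
    {L L' : Type} [LieRing L] [LieRing L'] (H : PresZ p l m h B β L) (H' : PresZ p l m' h' B β L')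
    (hC : CondZ p c l rest L) : CondZ p c l rest L' := by
  have := hB.finite hp
  have : NeZero (p ^ m') := ⟨(pow_pos hp.pos _).ne'⟩
  have : NeZero (p ^ l) := ⟨(pow_pos hp.pos _).ne'⟩
  have hb : ∀ k, lieLCS L k = ⊥ ↔ lieLCS L' k = ⊥ := fun k => by
    rw [lcs_bot hp hl h h2 H, lcs_bot hp hl h' h2' H']
  obtain ⟨e, -⟩ := H
  obtain ⟨e', -⟩ := H'
  obtain ⟨⟨k, hk⟩, hcl, hmu, hty⟩ := hC
  have hmu' : aMuInv p L' 2 = l := by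
    have : Finite L' := Finite.of_equiv _ e'.symm.toEquiv
    rw [aMuInv_congr p e', aMuInv_two hp h' B hB.1 hB.2.1 hB.2.2]
  refine ⟨⟨k, (hb k).1 hk⟩, ?_, hmu', ?_⟩
  · rw [← hcl]; unfold lieNilClass; simp_rw [hb]
  · rw [hmu'] ; rw [hmu] at hty
    obtain ⟨g⟩ := omegaEquiv hp h hB.2.1 e
    obtain ⟨g'⟩ := omegaEquiv hp h' hB.2.1 e'
    rw [← aHasType_congr p g', aHasType_congr p g]
    exact hty

lemma presZ_of_cond {p l f c n : ℕ} {rest : List ℕ} (hp : p.Prime) (hl : 0 < l)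
    (hsum : (l :: rest).sum = f) (hn : f + 2 * l ≤ n) (L : Type) [LieRing L]
    (hL : Nat.card L = p ^ n) (hC : CondZ p c l rest L) (h : l ≤ n - f) :
    ∃ (B : Type) (_ : AddCommGroup B) (β : ZMod (p ^ l) × B → ZMod (p ^ l) × B → ZMod (p ^ l) × B),
      GoodB p l f B ∧ PresZ p l (n - f) h B β L := by
  classical
  obtain ⟨-, -, hmu, hty⟩ := hC
  have hfL : Finite L := Nat.finite_of_card_ne_zero (by rw [hL]; exact (pow_pos hp.pos _).ne')
  obtain ⟨M, B, _, ⟨e⟩, hM⟩ := aSplit hp L (by omega) hL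
  have : NeZero (p ^ M) := ⟨(pow_pos hp.pos _).ne'⟩
  have hcard : p ^ n = p ^ M * Nat.card B := by
    rw [← hL, Nat.card_congr e.toEquiv, Nat.card_prod, Nat.card_zmod]
  obtain ⟨f', hf', hBc⟩ := (Nat.dvd_prime_pow hp).1 (Dvd.intro_left _ hcard.symm)
  have hfB : Finite B := Nat.finite_of_card_ne_zero (by rw [hBc]; exact (pow_pos hp.pos _).ne')
  have hnM : n = M + f' := by
    rw [hBc, ← pow_add] at hcard
    exact Nat.pow_right_injective hp.two_le hcard
  have hex : ∃ E, ∀ b : B, p ^ E • b = 0 := ⟨M, hM⟩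
  have hE := Nat.find_spec hex
  have hE' : ∀ k < Nat.find hex, ∃ b : B, p ^ k • b ≠ 0 := fun k hk => by
    simpa using Nat.find_min hex hk
  have hEM : Nat.find hex ≤ M := Nat.find_min' hex hM
  have hEl : Nat.find hex = l := by
    rw [← hmu, aMuInv_congr p e, aMuInv_two hp hEM B hBc hE hE']
  rw [hEl] at hE hE' hEM
  -- f' = f
  have hff : f' = f := by
    rw [hmu] at hty
    have h1 := aHasType_card (aOmega p L l) _ l
      (fun a => Subtype.ext ((mem_aOmega p L l _).1 a.2)) hty
    obtain ⟨g⟩ := omegaEquiv hp hEM hE e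
    have : NeZero (p ^ l) := ⟨(pow_pos hp.pos _).ne'⟩
    rw [← aLog_congr p g, aLog_prod, aLog_zmod hp, aLog_top hp B hBc hE] at h1
    simp at h1 hsum
    omega
  subst hff
  obtain rfl : M = n - f' := by omega
  -- bracket is killed by p^l
  have hdec : ∀ x : L, ∃ (z : ℤ) (b : L), x = z • e.symm (1, 0) + b ∧ p ^ l • b = 0 := by
    intro x
    obtain ⟨⟨s, b⟩, hx⟩ : ∃ q, q = e x := ⟨_, rfl⟩
    obtain ⟨z, rfl⟩ := ZMod.intCast_surjective s
    refine ⟨z, e.symm (0, b), ?_, ?_⟩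
    · rw [← map_zsmul, ← map_add, e.eq_symm_apply, ← hx]; simp
    · rw [← map_nsmul, Prod.smul_mk, hE, smul_zero]; exact map_zero _
  have hkill : ∀ x y : L, p ^ l • ⁅x, y⁆ = 0 := by
    intro x y
    obtain ⟨z, b, rfl, hb⟩ := hdec x
    obtain ⟨w, b', rfl, hb'⟩ := hdec y
    rw [add_lie, smul_add, ← nsmul_lie b, hb, zero_lie, add_zero, lie_add, smul_add,
      ← lie_nsmul _ b', hb', lie_zero, add_zero, zsmul_lie, lie_zsmul, lie_self]
    simp
  have hker : ∀ x : L, zPi p l _ h B (e x) = 0 → ∃ y : L, x = p ^ l • y := by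
    intro x hx
    obtain ⟨z, hz⟩ := zPi_ker hp h _ hx
    refine ⟨e.symm ((z : ZMod _), 0), ?_⟩
    rw [← map_nsmul, e.eq_symm_apply, hz]
    simp
  have hl0 : ∀ x y : L, zPi p l _ h B (e x) = 0 → ⁅x, y⁆ = 0 := by
    intro x y hx
    obtain ⟨x', rfl⟩ := hker x hx
    rw [nsmul_lie, hkill]
  have hr0 : ∀ x y : L, zPi p l _ h B (e y) = 0 → ⁅x, y⁆ = 0 := by
    intro x y hx
    obtain ⟨x', rfl⟩ := hker y hx
    rw [lie_nsmul, hkill]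
  choose σ hσ using zPi_surj (p := p) h (B := B)
  have hτ : ∀ v w, ∃ u, zInc p l _ h B u = e ⁅e.symm (σ v), e.symm (σ w)⁆ := fun v w =>
    zInc_range hp h _ (by rw [← map_nsmul, hkill, map_zero])
  choose β hβ using hτ
  refine ⟨B, _, β, ⟨hBc, hE, hE'⟩, e, fun x y => ?_⟩
  rw [hβ]
  congr 1
  have h1 : ∀ x : L, zPi p l _ h B (e (x - e.symm (σ (zPi p l _ h B (e x))))) = 0 := fun x => by
    rw [map_sub, map_sub, e.apply_symm_apply, hσ, sub_self]
  have h3 := hl0 _ y (h1 x)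
  have h4 := hr0 (e.symm (σ (zPi p l _ h B (e x)))) _ (h1 y)
  rw [sub_lie, sub_eq_zero] at h3
  rw [lie_sub, sub_eq_zero] at h4
  rw [h3, h4]

lemma quot_card {α α' : Type} (r : α → α → Prop) (s : α' → α' → Prop) (R : α → α' → Prop)
    (hr : ∀ a, r a a) (hs : ∀ a, s a a)
    (h1 : ∀ a, ∃ b, R a b) (h2 : ∀ b, ∃ a, R a b)
    (h3 : ∀ a b a' b', R a b → R a' b' → r a a' → s b b')
    (h4 : ∀ a b a' b', R a b → R a' b' → s b b' → r a a') :
    Nat.card (Quot r) = Nat.card (Quot s) := by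
  choose F hF using h1
  choose G hG using h2
  refine Nat.card_congr ⟨Quot.map F fun a a' h => h3 _ _ _ _ (hF a) (hF a') h,
    Quot.map G fun a a' h => h4 _ _ _ _ (hG a) (hG a') h, ?_, ?_⟩
  · rintro ⟨a⟩
    exact Quot.sound (h4 _ _ _ _ (hG (F a)) (hF a) (hs _))
  · rintro ⟨a⟩
    exact Quot.sound (h3 _ _ _ _ (hF (G a)) (hG a) (hr _))

end S12C

/-- Let `p` be a prime, `(λ₁, ..., λ_k)` a partition of `f` with
`λ₁ ≥ ... ≥ λ_k`, and `n ≥ f + 2λ₁`.  For every positive integer `c` the number of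
isomorphism classes of nilpotent Lie rings `L` of order `p ^ n` of class exactly `c` with
`μ_2(L) = λ₁` and `Ω_{μ_2(L)}(L)` of type invariants `(λ₁, λ₁, λ₂, ..., λ_k)` is
independent of `n`. -/
theorem stmt12_count_stable (p : ℕ) (hp : p.Prime) (f : ℕ)
    (lam1 : ℕ) (rest : List ℕ)
    (hsort : List.Pairwise (· ≥ ·) (lam1 :: rest))
    (hpos : ∀ x ∈ lam1 :: rest, 0 < x)
    (hsum : (lam1 :: rest).sum = f)
    (c : ℕ) (hc : 0 < c)
    (n n' : ℕ) (hn : f + 2 * lam1 ≤ n) (hn' : f + 2 * lam1 ≤ n') :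
    stmt12Count p n c lam1 rest = stmt12Count p n' c lam1 rest := by
  have hl : 0 < lam1 := hpos _ (by simp)
  have hf : lam1 ≤ f := by rw [← hsum]; simp
  have h : lam1 ≤ n - f := by omega
  have h' : lam1 ≤ n' - f := by omega
  have h2 : 2 * lam1 ≤ n - f := by omega
  have h2' : 2 * lam1 ≤ n' - f := by omega
  unfold stmt12Count lieClassCount
  refine quot_card _ _ (fun s t => ∃ (B : Type) (_ : AddCommGroup B)
      (β : ZMod (p ^ lam1) × B → ZMod (p ^ lam1) × B → ZMod (p ^ lam1) × B),
      GoodB p lam1 f B ∧ @PresZ p lam1 (n - f) h B _ β _ s.1 ∧ @PresZ p lam1 (n' - f) h' B _ β _ t.1)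
    ?_ ?_ ?_ ?_ ?_ ?_
  · intro a
    exact ⟨@AddEquiv.refl _ (addOfLieRing _ a.1), fun _ _ => rfl⟩
  · intro a
    exact ⟨@AddEquiv.refl _ (addOfLieRing _ a.1), fun _ _ => rfl⟩
  · rintro ⟨s, hs⟩
    letI := s
    have hs' : CondZ p c lam1 rest (Fin (p ^ n)) := hs
    obtain ⟨B, _, β, hB, H⟩ := presZ_of_cond hp hl hsum hn _ (Nat.card_fin _) hs' h
    obtain ⟨t, ht⟩ := presZ_exists (n' := n') hp h h' h2 h2' (by omega) hB H
    exact ⟨⟨t, @cond_transfer p lam1 _ _ f c rest hp hl h h' h2 h2' B _ hB β _ _ s t H ht hs'⟩,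
      B, _, β, hB, H, ht⟩
  · rintro ⟨s, hs⟩
    letI := s
    have hs' : CondZ p c lam1 rest (Fin (p ^ n')) := hs
    obtain ⟨B, _, β, hB, H⟩ := presZ_of_cond hp hl hsum hn' _ (Nat.card_fin _) hs' h'
    obtain ⟨t, ht⟩ := presZ_exists (n' := n) hp h' h h2' h2 (by omega) hB H
    exact ⟨⟨t, @cond_transfer p lam1 _ _ f c rest hp hl h' h h2' h2 B _ hB β _ _ s t H ht hs'⟩,
      B, _, β, hB, ht, H⟩
  · rintro ⟨s1, _⟩ ⟨t1, _⟩ ⟨s2, _⟩ ⟨t2, _⟩ ⟨B, _, β, hB, H1, H1'⟩ ⟨C, _, γ, hC, H2, H2'⟩ hiso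
    exact @isoZ_transfer p lam1 _ _ f f hp hl h h' h2 h2' B _ C _ hB hC β γ _ _ _ _ s1 s2 t1 t2
      H1 H2 H1' H2' hiso
  · rintro ⟨s1, _⟩ ⟨t1, _⟩ ⟨s2, _⟩ ⟨t2, _⟩ ⟨B, _, β, hB, H1, H1'⟩ ⟨C, _, γ, hC, H2, H2'⟩ hiso
    exact @isoZ_transfer p lam1 _ _ f f hp hl h' h h2' h2 B _ C _ hB hC β γ _ _ _ _ t1 t2 s1 s2
      H1' H2' H1 H2 hiso
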